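/- arXiv:2206.04740 — 3 statements merged into one kernel-verified Lean document; each statement's English description precedes it below -/
import Mathlib

section
/- Let d ≥ 2, let w ∈ EuclideanSpace ℝ (Fin d), let b ∈ ℝ, and define the classifier h(z) = 1 if ⟪w, z⟫ + b ≥ 0 and h(z) = -1 otherwise. Assume there exists a coordinate i ≠ d with w i ≠ 0. Then there exists a responsive pair with respect to coordinate d — i.e., there exist x, x' ∈ EuclideanSpace ℝ (Fin d) with x i = x' i for all i ≠ d, x d = 0, x' d = 1 and h(x) ≠ h(x') — if and only if the d-th coordinate of w is nonzero. -/
open RealInnerProductSpace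

/-!
The pairs for coordinate `j` are exactly the `(x, x + eⱼ)` with `x` in the hyperplane `x j = 0`, and
passing from `x` to `x + eⱼ` shifts the score `⟪w, x⟫ + b` by `w j`. A weight `w i ≠ 0` with
`i ≠ j` makes the score take every real value on that hyperplane, and a shift by `a` moves some real
number across the threshold `0` exactly when `a ≠ 0`.
-/

theorem ite_ne_ite_iff_not_iff {α : Type*} {p q : α} (hpq : p ≠ q) (P Q : Prop)
    [Decidable P] [Decidable Q] :
    (if P then p else q) ≠ (if Q then p else q) ↔ ¬(P ↔ Q) := by
  by_cases hP : P <;> by_cases hQ : Q <;> simp [hP, hQ, hpq, hpq.symm]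

theorem exists_not_nonneg_iff_nonneg_add_iff {G : Type*} [AddCommGroup G] [LinearOrder G]
    [IsOrderedAddMonoid G] {a : G} : (∃ s : G, ¬(0 ≤ s ↔ 0 ≤ s + a)) ↔ a ≠ 0 := by
  constructor
  · rintro ⟨s, hs⟩ rfl
    exact hs (by rw [add_zero])
  · intro ha
    rcases ha.lt_or_gt with hneg | hpos
    · exact ⟨0, by simp [hneg]⟩
    · exact ⟨-a, by simp [hpos]⟩

theorem exists_mem_not_nonneg_iff_nonneg_add_iff {K V : Type*} [DivisionRing K] [LinearOrder K]
    [IsOrderedAddMonoid K] [AddCommGroup V] [Module K V] {S : Submodule K V} {f : V →ₗ[K] K}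
    (hf : ∃ v ∈ S, f v ≠ 0) (b : K) (u : V) :
    (∃ x ∈ S, ¬(0 ≤ f x + b ↔ 0 ≤ f (x + u) + b)) ↔ f u ≠ 0 := by
  have hsurj : Function.Surjective (f.domRestrict S) := by
    obtain ⟨v, hvS, hv⟩ := hf
    exact LinearMap.surjective fun h0 => hv (LinearMap.congr_fun h0 ⟨v, hvS⟩)
  rw [← exists_not_nonneg_iff_nonneg_add_iff]
  constructor
  · rintro ⟨x, -, hx⟩
    exact ⟨f x + b, by rwa [add_right_comm, ← map_add]⟩
  · rintro ⟨s, hs⟩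
    obtain ⟨⟨x, hxS⟩, hx : f x = s - b⟩ := hsurj (s - b)
    refine ⟨x, hxS, ?_⟩
    rwa [map_add, add_right_comm, hx, sub_add_cancel]

/-- `(x, x')` is a responsive pair for `h` with respect to the feature `j`: the inputs agree off
`j`, take the values `0` and `1` at `j`, and receive different labels. The classifier `h` may be any
function into any label type. -/
def IsResponsivePair {ι α : Type*} (h : EuclideanSpace ℝ ι → α) (j : ι)
    (x x' : EuclideanSpace ℝ ι) : Prop :=
  (∀ i, i ≠ j → x i = x' i) ∧ x j = 0 ∧ x' j = 1 ∧ h x ≠ h x'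

theorem isResponsivePair_iff_eq_add_single {ι α : Type*} [DecidableEq ι]
    {h : EuclideanSpace ℝ ι → α} {j : ι} {x x' : EuclideanSpace ℝ ι} :
    IsResponsivePair h j x x' ↔ x j = 0 ∧ x' = x + EuclideanSpace.single j 1 ∧ h x ≠ h x' := by
  constructor
  · rintro ⟨hagree, hx, hx', hne⟩
    refine ⟨hx, ?_, hne⟩
    ext i
    by_cases hij : i = j
    · subst hij
      simp [hx, hx']
    · simp [hij, hagree i hij]
  · rintro ⟨hx, rfl, hne⟩
    exact ⟨fun i hij => by simp [hij], hx, by simp [hx], hne⟩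

theorem exists_isResponsivePair_iff_exists_mem_ker {ι α : Type*} [DecidableEq ι]
    {h : EuclideanSpace ℝ ι → α} {j : ι} :
    (∃ x x', IsResponsivePair h j x x') ↔
      ∃ x ∈ (EuclideanSpace.projₗ j : EuclideanSpace ℝ ι →ₗ[ℝ] ℝ).ker,
        h x ≠ h (x + EuclideanSpace.single j 1) := by
  simp [isResponsivePair_iff_eq_add_single]

theorem responsive_pair_exists_iff_weight_nonzero_general {ι α : Type*} [Fintype ι]
    {p q : α} (hpq : p ≠ q) (w : EuclideanSpace ℝ ι) (b : ℝ) (h : EuclideanSpace ℝ ι → α)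
    (hh : ∀ z, h z = if 0 ≤ ⟪w, z⟫ + b then p else q) (j : ι) (hother : ∃ i, i ≠ j ∧ w i ≠ 0) :
    (∃ x x', IsResponsivePair h j x x') ↔ w j ≠ 0 := by
  classical
  have inner_single (k : ι) : innerₗ _ w (EuclideanSpace.single k 1) = w k := by
    simp [EuclideanSpace.inner_single_right]
  have hf : ∃ v ∈ (EuclideanSpace.projₗ j : EuclideanSpace ℝ ι →ₗ[ℝ] ℝ).ker,
      innerₗ _ w v ≠ 0 := by
    obtain ⟨i, hij, hi⟩ := hother
    exact ⟨EuclideanSpace.single i 1, by simp [hij.symm], by rwa [inner_single]⟩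
  simp only [exists_isResponsivePair_iff_exists_mem_ker, hh, ite_ne_ite_iff_not_iff hpq]
  rw [← inner_single j]
  exact exists_mem_not_nonneg_iff_nonneg_add_iff hf b _

theorem responsive_pair_exists_iff_weight_nonzero
    {d : ℕ} (hd : 2 ≤ d)
    (w : EuclideanSpace ℝ (Fin d)) (b : ℝ)
    (h : EuclideanSpace ℝ (Fin d) → ℤ)
    (hh : ∀ z, h z = if 0 ≤ ⟪w, z⟫ + b then 1 else -1)
    (j : Fin d)  -- the feature of interest (the "d-th" coordinate)
    (hother : ∃ i : Fin d, i ≠ j ∧ w i ≠ 0) :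
    (∃ x x' : EuclideanSpace ℝ (Fin d),
        (∀ i : Fin d, i ≠ j → x i = x' i) ∧ x j = 0 ∧ x' j = 1 ∧ h x ≠ h x')
      ↔ w j ≠ 0 :=
  responsive_pair_exists_iff_weight_nonzero_general (by decide) w b h hh j hother
end

section
/- Let n ≥ 1, let w ∈ EuclideanSpace ℝ (Fin n) with ‖w‖ = 1, let b ∈ ℝ, let t ≥ 0 and r > 0. Then the Lebesgue measure (volume) of the set {x ∈ EuclideanSpace ℝ (Fin n) : ‖x‖ ≤ r ∧ b ≤ ⟪w, x⟫ ∧ ⟪w, x⟫ < b + t} is at most (2r)^(n-1) · t. -/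
open RealInnerProductSpace MeasureTheory

/-! Extend the unit normal `w` to an orthonormal basis. In these coordinates the ball lies in a cube
of side `2 * r`, and the slab constrains the coordinate along `w` alone, so their intersection lies
in the box obtained from the cube by replacing that one side. An orthonormal change of coordinates
preserves volume, and the volume of the box is the product of the lengths of its sides. -/

theorem dist_inner_right_le {𝕜 E : Type*} [RCLike 𝕜] [SeminormedAddCommGroup E]
    [InnerProductSpace 𝕜 E] (u x y : E) :
    dist (inner 𝕜 u x) (inner 𝕜 u y) ≤ ‖u‖ * dist x y := by
  rw [dist_eq_norm, ← inner_sub_right, dist_eq_norm]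
  exact norm_inner_le_norm u (x - y)

section

open Module (finrank)

variable {ι E : Type*} [Fintype ι] [NormedAddCommGroup E] [InnerProductSpace ℝ E]
  [FiniteDimensional ℝ E] [MeasurableSpace E] [BorelSpace E]

theorem volume_setOf_forall_inner_mem (e : OrthonormalBasis ι ℝ E) (s : ι → Set ℝ) :
    volume {x : E | ∀ i, ⟪e i, x⟫ ∈ s i} = ∏ i, volume (s i) := by
  let coords : E ≃ᵐ (ι → ℝ) := e.measurableEquiv.trans (MeasurableEquiv.toLp 2 (ι → ℝ)).symm
  have coords_apply (x : E) (i : ι) : coords x i = ⟪e i, x⟫ := e.repr_apply_apply x i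
  have coords_volume_preserving : MeasurePreserving coords :=
    e.measurePreserving_measurableEquiv.trans
      (EuclideanSpace.volume_preserving_symm_measurableEquiv_toLp ι)
  have preimage_box : coords ⁻¹' Set.univ.pi s = {x : E | ∀ i, ⟪e i, x⟫ ∈ s i} := by
    simp [Set.preimage, coords_apply]
  rw [← preimage_box, coords_volume_preserving.measure_preimage_equiv, volume_pi_pi]

theorem volume_setOf_dist_le_and_inner_basis_mem_le (e : OrthonormalBasis ι ℝ E) (i : ι) (c : E)
    (r : ℝ) (s : Set ℝ) :
    volume {x : E | dist x c ≤ r ∧ ⟪e i, x⟫ ∈ s} ≤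
      ENNReal.ofReal (2 * r) ^ (Fintype.card ι - 1) * volume s := by
  classical
  let side : ι → Set ℝ := Function.update (fun j ↦ Metric.closedBall ⟪e j, c⟫ r) i s
  have subset_box :
      {x : E | dist x c ≤ r ∧ ⟪e i, x⟫ ∈ s} ⊆ {x | ∀ j, ⟪e j, x⟫ ∈ side j} := by
    rintro x ⟨hxc, hxs⟩ j
    obtain rfl | hj := eq_or_ne j i
    · simpa [side] using hxs
    · have dist_coord_le : dist ⟪e j, x⟫ ⟪e j, c⟫ ≤ dist x c := by
        simpa using dist_inner_right_le (𝕜 := ℝ) (e j) x c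
      simpa [side, hj] using dist_coord_le.trans hxc
  have volume_side_self : volume (side i) = volume s := by simp [side]
  have volume_side_of_ne : ∀ j ∈ Finset.univ.erase i, volume (side j) = ENNReal.ofReal (2 * r) := by
    intro j hj
    simp only [side, Function.update_of_ne (Finset.ne_of_mem_erase hj), Real.volume_closedBall]
  calc
    volume {x : E | dist x c ≤ r ∧ ⟪e i, x⟫ ∈ s}
        ≤ volume {x | ∀ j, ⟪e j, x⟫ ∈ side j} := measure_mono subset_box
    _ = ∏ j, volume (side j) := volume_setOf_forall_inner_mem e side
    _ = (∏ j ∈ Finset.univ.erase i, volume (side j)) * volume (side i) :=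
      (Finset.prod_erase_mul _ _ (Finset.mem_univ i)).symm
    _ = ENNReal.ofReal (2 * r) ^ (Fintype.card ι - 1) * volume s := by
      rw [Finset.prod_eq_pow_card volume_side_of_ne, volume_side_self,
        Finset.card_erase_of_mem (Finset.mem_univ i), Finset.card_univ]

theorem slab_ball_intersection_volume_bound_general {w : E} (hw : ‖w‖ = 1) (c : E) (r : ℝ)
    (s : Set ℝ) :
    volume {x : E | dist x c ≤ r ∧ ⟪w, x⟫ ∈ s} ≤
      ENNReal.ofReal (2 * r) ^ (finrank ℝ E - 1) * volume s := by
  have orthonormal_w : Orthonormal ℝ ((↑) : ({w} : Set E) → E) := by simp [hw]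
  obtain ⟨u, e, hwu, he⟩ := orthonormal_w.exists_orthonormalBasis_extension
  have e_apply : e ⟨w, hwu rfl⟩ = w := congrFun he _
  simpa only [e_apply, Module.finrank_eq_card_basis e.toBasis] using
    volume_setOf_dist_le_and_inner_basis_mem_le e ⟨w, hwu rfl⟩ c r s

end

theorem slab_ball_intersection_volume_bound
    {n : ℕ} (hn : 1 ≤ n)
    (w : EuclideanSpace ℝ (Fin n)) (hw : ‖w‖ = 1)
    (b t r : ℝ) (ht : 0 ≤ t) (hr : 0 < r) :
    volume {x : EuclideanSpace ℝ (Fin n) | ‖x‖ ≤ r ∧ b ≤ ⟪w, x⟫ ∧ ⟪w, x⟫ < b + t}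
      ≤ ENNReal.ofReal ((2 * r) ^ (n - 1) * t) := by
  rw [ENNReal.ofReal_mul (by positivity), ENNReal.ofReal_pow (by positivity)]
  simpa using slab_ball_intersection_volume_bound_general hw 0 r (Set.Ico b (b + t))
end

section
/- Let θ₁, θ₂ ∈ ℝ with -1 ≤ θ₂ ≤ 1, -1 ≤ θ₁ ≤ 1 and θ₁ - θ₂ ≥ 1. Define h : ℝ × ℝ → ℤ on points (v, g) with g ∈ {0,1} by h(v, 0) = 1 if v ≥ θ₁ and -1 otherwise, and h(v, 1) = 1 if v ≥ θ₂ and -1 otherwise. Then h(-1, 0) = -1, h(θ₂, 1) = 1, and for every point (v, g) with g ∈ {0,1} and h(v, g) = 1, the Euclidean distance from (-1, 0) to (θ₂, 1) is at most the Euclidean distance from (-1, 0) to (v, g); i.e., (θ₂, 1) is a closest point to (-1, 0) among points labeled differently from (-1, 0). -/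
/-!
Points of the row `g = 0` that are labelled `1` lie at distance at least `θ₁ - a` from the query
`(a, 0)`, whereas the nearest point labelled `1` of the row `g = 1` is `(θ₂, 1)`, as the query lies
to the left of `θ₂`. So crossing over is optimal once the latter distance is at most `θ₁ - a`. By
the triangle inequality through `(θ₂, 0)` it is at most `(θ₂ - a) + 1`.
-/

theorem sqrt_sq_add_sq_le_add {x y : ℝ} (hx : 0 ≤ x) (hy : 0 ≤ y) :
    √(x ^ 2 + y ^ 2) ≤ x + y :=
  Real.sqrt_le_iff.2 ⟨add_nonneg hx hy, pow_add_pow_le hx hy two_ne_zero⟩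

theorem le_sqrt_sq_add_sq (x y : ℝ) : x ≤ √(x ^ 2 + y ^ 2) :=
  Real.le_sqrt_of_sq_le (le_add_of_nonneg_right (sq_nonneg y))

theorem extended_threshold_counterfactual_case_far_general
    (a θ₁ θ₂ : ℝ) (haθ₂ : a ≤ θ₂)
    (hfar : √((θ₂ - a) ^ 2 + (1 - 0) ^ 2) ≤ θ₁ - a)
    (h : ℝ → ℝ → ℤ)
    (hh0 : ∀ v : ℝ, h v 0 = if θ₁ ≤ v then 1 else -1)
    (hh1 : ∀ v : ℝ, h v 1 = if θ₂ ≤ v then 1 else -1) :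
    h a 0 = -1 ∧ h θ₂ 1 = 1 ∧
    ∀ v g : ℝ, (g = 0 ∨ g = 1) → h v g = 1 →
      √((θ₂ - a) ^ 2 + (1 - 0) ^ 2) ≤ √((v - a) ^ 2 + (g - 0) ^ 2) := by
  have haθ₁ : a < θ₁ := sub_pos.1 (hfar.trans_lt' (by positivity))
  refine ⟨by rw [hh0, if_neg haθ₁.not_ge], by rw [hh1, if_pos le_rfl], ?_⟩
  rintro v g (rfl | rfl) hv
  · have hθ₁v : θ₁ ≤ v := by simpa [hh0] using hv
    calc √((θ₂ - a) ^ 2 + (1 - 0) ^ 2) ≤ θ₁ - a := hfar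
      _ ≤ v - a := sub_le_sub_right hθ₁v a
      _ ≤ √((v - a) ^ 2 + (0 - 0) ^ 2) := le_sqrt_sq_add_sq _ _
  · have hθ₂v : θ₂ ≤ v := by simpa [hh1] using hv
    gcongr

theorem extended_threshold_counterfactual_case_far
    (θ₁ θ₂ : ℝ) (h2l : -1 ≤ θ₂) (h2u : θ₂ ≤ 1) (h1l : -1 ≤ θ₁) (h1u : θ₁ ≤ 1)
    (hfar : θ₁ - θ₂ ≥ 1)
    (h : ℝ → ℝ → ℤ)
    (hh0 : ∀ v : ℝ, h v 0 = if θ₁ ≤ v then 1 else -1)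
    (hh1 : ∀ v : ℝ, h v 1 = if θ₂ ≤ v then 1 else -1) :
    h (-1) 0 = -1 ∧ h θ₂ 1 = 1 ∧
    ∀ v g : ℝ, (g = 0 ∨ g = 1) → h v g = 1 →
      Real.sqrt ((θ₂ - (-1)) ^ 2 + (1 - 0) ^ 2)
        ≤ Real.sqrt ((v - (-1)) ^ 2 + (g - 0) ^ 2) :=
  extended_threshold_counterfactual_case_far_general (-1) θ₁ θ₂ h2l
    ((sqrt_sq_add_sq_le_add (by linarith) (by norm_num)).trans (by linarith)) h hh0 hh1
end
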